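/- Every function f : ℚ ∩ [0,1] → ℝ is Baire-one (a pointwise limit of continuous functions on ℚ ∩ [0,1]) and piecewise continuous (ℚ ∩ [0,1] is an increasing countable union of closed subsets on each of which f is continuous). -/

import Mathlib

open Set Filter Topology

def IsFSigma {X : Type*} [TopologicalSpace X] (s : Set X) : Prop :=
  ∃ F : ℕ → Set X, (∀ n, IsClosed (F n)) ∧ s = ⋃ n, F n

def FirstBorelClass {X Y : Type*} [TopologicalSpace X] [TopologicalSpace Y] (f : X → Y) : Prop :=
  ∀ U : Set Y, IsOpen U → IsFSigma (f ⁻¹' U)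


theorem countable_aux {X : Type*} [TopologicalSpace X] [T1Space X] [NormalSpace X] [Countable X]
    (f : X → ℝ) :
    (∃ fₙ : ℕ → X → ℝ,
      (∀ n, Continuous (fₙ n)) ∧ ∀ x, Tendsto (fun n => fₙ n x) atTop (𝓝 (f x))) ∧
    (∃ H : ℕ → Set X,
      Monotone H ∧ (∀ n, IsClosed (H n)) ∧ (⋃ n, H n) = univ ∧
      ∀ n, ContinuousOn f (H n)) := by
  obtain ⟨e, he⟩ := exists_injective_nat X
  have hfin : ∀ n, (e ⁻¹' Set.Iic n).Finite := fun n =>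
    (Set.finite_Iic n).preimage he.injOn
  have hcont : ∀ n, ContinuousOn f (e ⁻¹' Set.Iic n) := fun n => (hfin n).continuousOn f
  refine ⟨?_, fun n => e ⁻¹' Set.Iic n, ?_, fun n => (hfin n).isClosed, ?_, hcont⟩
  · have key : ∀ n, ∃ g : C(X, ℝ), ∀ x ∈ e ⁻¹' Set.Iic n, g x = f x := by
      intro n
      obtain ⟨g, hg⟩ := ContinuousMap.exists_restrict_eq (hfin n).isClosed
        ⟨(e ⁻¹' Set.Iic n).restrict f, (hcont n).restrict⟩
      exact ⟨g, fun x hx => DFunLike.congr_fun hg ⟨x, hx⟩⟩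
    choose g hg using key
    refine ⟨fun n => g n, fun n => (g n).continuous, fun x => ?_⟩
    apply tendsto_const_nhds.congr'
    filter_upwards [eventually_ge_atTop (e x)] with n hn
    exact (hg n x hn).symm
  · intro m n hmn x hx
    exact le_trans (show e x ≤ m from hx) hmn
  · exact Set.eq_univ_of_forall fun x => Set.mem_iUnion.2 ⟨e x, le_refl (e x)⟩

theorem rational_domain_baire_one_piecewise
    (f : {x : ℝ // x ∈ Set.Icc (0:ℝ) 1 ∧ ∃ q : ℚ, (q : ℝ) = x} → ℝ) :
    (∃ fₙ : ℕ → {x : ℝ // x ∈ Set.Icc (0:ℝ) 1 ∧ ∃ q : ℚ, (q : ℝ) = x} → ℝ,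
      (∀ n, Continuous (fₙ n)) ∧ ∀ x, Tendsto (fun n => fₙ n x) atTop (𝓝 (f x))) ∧
    (∃ H : ℕ → Set {x : ℝ // x ∈ Set.Icc (0:ℝ) 1 ∧ ∃ q : ℚ, (q : ℝ) = x},
      Monotone H ∧ (∀ n, IsClosed (H n)) ∧ (⋃ n, H n) = univ ∧
      ∀ n, ContinuousOn f (H n)) := by
  have hc : Countable {x : ℝ // x ∈ Set.Icc (0:ℝ) 1 ∧ ∃ q : ℚ, (q : ℝ) = x} :=
    ((Set.countable_range (fun q : ℚ => (q : ℝ))).mono (fun x hx => hx.2)).to_subtype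
  exact countable_aux f
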